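/- arXiv:2503.16393 — 2 statements merged into one kernel-verified Lean document; each statement's English description precedes it below -/
import Mathlib

section
/- Let R be a regular domain with a generalized regular system of parameters x = x_1,…,x_p, and let p = (x_1,…,x_p). Let f ∈ R and let h·f = Σ_{i=1}^t r_i·m_i be a monomial representation of f (with m_1,…,m_t monomials in x and h, r_1,…,r_t ∈ R ∖ p) such that m_i ∤ m_k for all i ≠ k. Then the set of monomials {m_1,…,m_t} is uniquely determined by f; i.e., any two such minimal monomial representations of f involve the same set of monomials. -/
open Ideal Set Pointwise

noncomputable section

namespace NND

variable {R : Type*} [CommRing R] {p : ℕ}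

/-- The monomial `x^a = x 0 ^ a 0 * ⋯` in the elements `x`. -/
def mono (x : Fin p → R) (a : Fin p → ℕ) : R := ∏ i, x i ^ a i

/-- A (commutative) ring is regular local if it is Noetherian local and its maximal ideal
can be generated by `dim R` elements. -/
def IsRegularLocal (A : Type*) [CommRing A] : Prop :=
  IsNoetherianRing A ∧ ∃ h : IsLocalRing A, ∃ s : Finset A,
    Ideal.span (s : Set A) = @IsLocalRing.maximalIdeal A _ h ∧
    (s.card : WithBot (WithTop ℕ)) = ringKrullDim A

/-- A regular domain: an integral domain whose localization at every prime is regular local. -/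
def IsRegularDomain (A : Type*) [CommRing A] : Prop :=
  IsDomain A ∧ ∀ (P : Ideal A) (hP : P.IsPrime), IsRegularLocal (@Localization.AtPrime A _ P hP)

/-- `x` is a regular sequence. -/
def IsRegSeq (x : Fin p → R) : Prop :=
  Ideal.span (Set.range x) ≠ ⊤ ∧
  ∀ i : Fin p, ∀ r : R, r * x i ∈ Ideal.span (x '' {j | j < i}) →
    r ∈ Ideal.span (x '' {j | j < i})

/-- A generalized regular system of parameters: a permutable regular sequence all of whose
subquotients are regular domains. -/
def IsGRSOP (x : Fin p → R) : Prop :=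
  (∀ σ : Equiv.Perm (Fin p), IsRegSeq (x ∘ σ)) ∧
  ∀ S : Set (Fin p), IsRegularDomain (R ⧸ Ideal.span (x '' S))

/-- `A` is the exponent set of a monomial representation of `f`:
`h * f = ∑_{a ∈ A} r a * x^a` with `h` and the `r a` outside `(x_1, …, x_p)`. -/
def IsMonRep (x : Fin p → R) (f : R) (A : Finset (Fin p → ℕ)) : Prop :=
  ∃ (h : R) (r : (Fin p → ℕ) → R),
    h ∉ Ideal.span (Set.range x) ∧ (∀ a ∈ A, r a ∉ Ideal.span (Set.range x)) ∧
    h * f = ∑ a ∈ A, r a * mono x a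

/-- A minimal (irredundant) monomial representation: no monomial divides another. -/
def IsMinMonRep (x : Fin p → R) (f : R) (A : Finset (Fin p → ℕ)) : Prop :=
  IsMonRep x f A ∧ ∀ a ∈ A, ∀ b ∈ A, a ≠ b → ¬ mono x a ∣ mono x b

open Classical in
/-- The support of `f`: the exponent set of its (unique) minimal monomial representation. -/
def supp (x : Fin p → R) (f : R) : Set (Fin p → ℕ) :=
  if h : ∃ A : Finset (Fin p → ℕ), IsMinMonRep x f A then ↑h.choose else ∅

/-- Embedding of exponent vectors into `ℝ^p`. -/
def toR (a : Fin p → ℕ) : Fin p → ℝ := fun i => (a i : ℝ)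

/-- The Newton polyhedron of a set of ring elements. -/
def Γ (x : Fin p → R) (S : Set R) : Set (Fin p → ℝ) :=
  convexHull ℝ (toR '' ⋃ f ∈ S, supp x f)

/-- The Newton polyhedron `Γ_x(I)` of an ideal. -/
def ΓI (x : Fin p → R) (I : Ideal R) : Set (Fin p → ℝ) := Γ x (I : Set R)

/-- The Newton polyhedron `Γ_x(f)` of an element: that of the principal ideal `(f)`. -/
def ΓE (x : Fin p → R) (f : R) : Set (Fin p → ℝ) := ΓI x (Ideal.span {f})

/-- The integral closure of an ideal `I`: elements satisfying an equation of integral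
dependence `f^n + a_1 f^{n-1} + ⋯ + a_n = 0` with `a_i ∈ I^i`. -/
def intClosure (I : Ideal R) : Set R :=
  {f | ∃ n : ℕ, 0 < n ∧ ∃ a : ℕ → R, (∀ i ∈ Finset.Icc 1 n, a i ∈ I ^ i) ∧
    f ^ n + ∑ i ∈ Finset.Icc 1 n, a i * f ^ (n - i) = 0}

/-- The monomial ideal `I_0` spanned by the lattice points of `Γ_x(I)`. -/
def idealZero (x : Fin p → R) (I : Ideal R) : Ideal R :=
  Ideal.span (mono x '' {a | toR a ∈ ΓI x I})

/-- The ideal `K_I` generated by the monomials lying in the integral closure of `I`. -/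
def KIdeal (x : Fin p → R) (I : Ideal R) : Ideal R :=
  Ideal.span {m | (∃ a : Fin p → ℕ, m = mono x a) ∧ m ∈ intClosure I}

/-!
Multiplying two representations `h * f = ∑ r a * x^a` and `h' * f = ∑ s b * x^b` crosswise shows
that `h' * r a * x^a` lies in the ideal generated by the other monomials `x^a'` of the first and
all monomials `x^b` of the second. For a regular sequence `x`, a multiple `c * x^a` lies in an
ideal generated by monomials that do not divide `x^a` only if `c ∈ (x_1, …, x_p)`. As this ideal
is prime, `c = h' * r a` lies outside it, so minimality of the first representation forces some
`b ≤ a`. Hence both exponent sets generate the same upper set, and an antichain is recovered from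
its upper closure as the set of minimal elements.

The property of regular sequences is proved by induction on their length. If `x` has it and `z` is
regular modulo `(x_1, …, x_p)`, then `z` is regular modulo every ideal generated by all monomials
in `x` outside a finite lower set of exponents. So a power of `z` can be cancelled from a relation
`c * x^a * z^k ∈ (z^(k+1)) + (x^b : b ≰ a)`, and a second cancellation gives `c ∈ (x_1, …, x_p, z)`.
-/

/-- The ideal generated by the monomials in `x` with exponents in `S`. -/
def monomialIdeal (x : Fin p → R) (S : Set (Fin p → ℕ)) : Ideal R :=
  Ideal.span (mono x '' S)

/-- The elements `x` behave with respect to monomial ideals like the variables of a polynomial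
ring: `c * x^a` lies in the ideal generated by the monomials `x^b` with `b ≰ a` only if the
coefficient `c` vanishes modulo `(x_1, …, x_p)`. -/
def IsMonomiallyIndependent (x : Fin p → R) : Prop :=
  ∀ (a : Fin p → ℕ) (c : R), c * mono x a ∈ monomialIdeal x (Iic a)ᶜ → c ∈ Ideal.span (range x)

section Monomials

variable (x : Fin p → R) {a b : Fin p → ℕ} {S T : Set (Fin p → ℕ)}

lemma mono_dvd_mono (h : a ≤ b) : mono x a ∣ mono x b :=
  Finset.prod_dvd_prod_of_dvd _ _ fun i _ => pow_dvd_pow _ (h i)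

lemma mono_add_single (a : Fin p → ℕ) (i : Fin p) :
    mono x (a + Pi.single i 1) = mono x a * x i := by
  simp [mono, pow_add, Finset.prod_mul_distrib, Pi.single_apply, pow_ite, -mul_ite]

lemma mono_mem_monomialIdeal (ha : a ∈ S) : mono x a ∈ monomialIdeal x S :=
  Ideal.subset_span (mem_image_of_mem _ ha)

lemma monomialIdeal_mono (hST : S ⊆ T) : monomialIdeal x S ≤ monomialIdeal x T :=
  Ideal.span_mono (image_mono hST)

lemma monomialIdeal_compl_sdiff_singleton (a : Fin p → ℕ) (S : Set (Fin p → ℕ)) :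
    monomialIdeal x (S \ {a})ᶜ = Ideal.span {mono x a} ⊔ monomialIdeal x Sᶜ := by
  have hinsert : (S \ {a})ᶜ = insert a Sᶜ := by
    rw [sdiff_eq, compl_inter, compl_compl, union_singleton]
  rw [hinsert, monomialIdeal, image_insert_eq, Ideal.span_insert, monomialIdeal]

lemma monomialIdeal_univ : monomialIdeal x univ = ⊤ := by
  rw [Ideal.eq_top_iff_one]
  simpa [mono] using mono_mem_monomialIdeal x (mem_univ 0)

lemma sum_mul_mono_mem_monomialIdeal {A : Finset (Fin p → ℕ)} (hA : ∀ a ∈ A, a ∈ S)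
    (r : (Fin p → ℕ) → R) : ∑ a ∈ A, r a * mono x a ∈ monomialIdeal x S :=
  Ideal.sum_mem _ fun a ha => Ideal.mul_mem_left _ _ (mono_mem_monomialIdeal x (hA a ha))

lemma mul_mono_mem_monomialIdeal (hS : ∀ i, a + Pi.single i 1 ∈ S) {c : R}
    (hc : c ∈ Ideal.span (range x)) : c * mono x a ∈ monomialIdeal x S := by
  have hle : Ideal.span (range x) ≤
      Submodule.comap (LinearMap.mulRight R (mono x a)) (monomialIdeal x S) := by
    refine Ideal.span_le.2 (range_subset_iff.2 fun i => ?_)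
    simpa [mono_add_single, mul_comm] using mono_mem_monomialIdeal x (hS i)
  exact hle hc

end Monomials

section LastVariable

variable (x : Fin (p + 1) → R) (a : Fin (p + 1) → ℕ)

lemma mono_eq_mono_init_mul :
    mono x a = mono (Fin.init x) (Fin.init a) * x (Fin.last p) ^ a (Fin.last p) :=
  Fin.prod_univ_castSucc _

lemma span_range_eq_span_last_sup :
    Ideal.span (range x) = Ideal.span {x (Fin.last p)} ⊔ Ideal.span (range (Fin.init x)) := by
  rw [← Ideal.span_insert, ← Fin.range_snoc, Fin.snoc_init_self]

lemma monomialIdeal_compl_Iic_le :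
    monomialIdeal x (Iic a)ᶜ ≤ Ideal.span {x (Fin.last p) ^ (a (Fin.last p) + 1)} ⊔
      monomialIdeal (Fin.init x) (Iic (Fin.init a))ᶜ := by
  refine Ideal.span_le.2 (image_subset_iff.2 fun b hb => ?_)
  rw [mem_preimage, mono_eq_mono_init_mul]
  by_cases hinit : Fin.init b ≤ Fin.init a
  · have hlast : a (Fin.last p) < b (Fin.last p) := by
      by_contra! hle
      exact hb (Fin.forall_fin_succ'.2 ⟨hinit, hle⟩)
    exact Ideal.mul_mem_left _ _ <| Ideal.mem_sup_left <|
      Ideal.mem_span_singleton.2 (pow_dvd_pow _ hlast)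
  · exact Ideal.mul_mem_right _ _ <| Ideal.mem_sup_right <| mono_mem_monomialIdeal _ hinit

end LastVariable

namespace IsMonomiallyIndependent

-- Moving a maximal element `a` of `C` to the complement enlarges the ideal by `x^a`, and
-- monomial independence identifies the quotient of the two ideals with `R ⧸ (x_1, …, x_p)`.
lemma isSMulRegular_quotient_monomialIdeal {x : Fin p → R} (hx : IsMonomiallyIndependent x)
    {z : R} (hz : IsSMulRegular (R ⧸ Ideal.span (range x)) z) (C : Finset (Fin p → ℕ))
    (hC : IsLowerSet (C : Set (Fin p → ℕ))) :
    IsSMulRegular (R ⧸ monomialIdeal x (C : Set (Fin p → ℕ))ᶜ) z := by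
  induction C using Finset.strongInduction with
  | H C ih =>
  obtain rfl | hne := C.eq_empty_or_nonempty
  · simp [isSMulRegular_quotient_iff_mem_of_smul_mem, monomialIdeal_univ]
  obtain ⟨a, haC, hmax⟩ := C.exists_maximal hne
  have hreg := ih (C.erase a) (Finset.erase_ssubset haC) <| by
    rw [Finset.coe_erase]
    exact hC.erase fun b hb hab => (hmax hb hab).antisymm hab
  rw [Finset.coe_erase, monomialIdeal_compl_sdiff_singleton] at hreg
  rw [isSMulRegular_quotient_iff_mem_of_smul_mem]
  intro r hr
  obtain ⟨c, y, hy, rfl⟩ := Ideal.mem_span_singleton_sup.1 <|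
    mem_of_isSMulRegular_quotient_of_smul_mem hreg (Ideal.mem_sup_right hr)
  have hIic : Iic a ⊆ (C : Set (Fin p → ℕ)) := fun _ hb => hC hb haC
  have hzc : z * c * mono x a ∈ monomialIdeal x (C : Set _)ᶜ := by
    convert Ideal.sub_mem _ hr (Ideal.mul_mem_left _ z hy) using 1
    rw [smul_eq_mul]
    ring
  have hc : c ∈ Ideal.span (range x) :=
    mem_of_isSMulRegular_quotient_of_smul_mem hz
      (hx a (z * c) (monomialIdeal_mono x (compl_subset_compl.2 hIic) hzc))
  refine add_mem (mul_mono_mem_monomialIdeal x (fun i hi => ?_) hc) hy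
  simpa using hmax hi le_self_add i

-- Modulo the larger ideal `(x^b : b ≮ a)` the assumption reads `v * z = 0`. Hence `v` is congruent
-- to some `w * x^a` modulo `(x^b : b ≰ a)`, and the assumption becomes one on `(c - w * z) * x^a`.
lemma mem_span_singleton_sup_of_mul_mono_sub_mem {x : Fin p → R}
    (hx : IsMonomiallyIndependent x) {z : R} (hz : IsSMulRegular (R ⧸ Ideal.span (range x)) z)
    {a : Fin p → ℕ} {c v : R} (hcv : c * mono x a - v * z ∈ monomialIdeal x (Iic a)ᶜ) :
    c ∈ Ideal.span {z} ⊔ Ideal.span (range x) := by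
  have hreg := hx.isSMulRegular_quotient_monomialIdeal hz (Finset.Iio a)
    (by simpa using isLowerSet_Iio a)
  rw [Finset.coe_Iio, ← Iic_sdiff_right, monomialIdeal_compl_sdiff_singleton] at hreg
  have hv : v ∈ Ideal.span {mono x a} ⊔ monomialIdeal x (Iic a)ᶜ := by
    refine mem_of_isSMulRegular_quotient_of_smul_mem hreg
      (Ideal.mem_span_singleton_sup.2 ⟨c, _, neg_mem hcv, ?_⟩)
    rw [smul_eq_mul]
    ring
  obtain ⟨w, u, hu, rfl⟩ := Ideal.mem_span_singleton_sup.1 hv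
  refine Ideal.mem_span_singleton_sup.2 ⟨w, c - w * z, hx a _ ?_, by ring⟩
  convert add_mem hcv (Ideal.mul_mem_left _ z hu) using 1
  ring

lemma of_init {x : Fin (p + 1) → R} (hx : IsMonomiallyIndependent (Fin.init x))
    (hz : IsSMulRegular (R ⧸ Ideal.span (range (Fin.init x))) (x (Fin.last p))) :
    IsMonomiallyIndependent x := by
  intro a c hc
  have hreg := hx.isSMulRegular_quotient_monomialIdeal hz (Finset.Iic (Fin.init a))
    (by simpa using isLowerSet_Iic _)
  rw [Finset.coe_Iic] at hreg
  obtain ⟨v, u, hu, huv⟩ :=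
    Ideal.mem_span_singleton_sup.1 (monomialIdeal_compl_Iic_le x a hc)
  have hcv : c * mono (Fin.init x) (Fin.init a) - v * x (Fin.last p) ∈
      monomialIdeal (Fin.init x) (Iic (Fin.init a))ᶜ := by
    refine mem_of_isSMulRegular_quotient_of_smul_mem (hreg.pow (a (Fin.last p))) ?_
    convert hu using 1
    rw [mono_eq_mono_init_mul] at huv
    rw [smul_eq_mul]
    linear_combination -huv
  rw [span_range_eq_span_last_sup]
  exact hx.mem_span_singleton_sup_of_mul_mono_sub_mem hz hcv

end IsMonomiallyIndependent

namespace IsRegSeq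

variable {x : Fin (p + 1) → R}

lemma init (hx : IsRegSeq x) : IsRegSeq (Fin.init x) := by
  have hspan : Ideal.span (range (Fin.init x)) ≤ Ideal.span (range x) :=
    Ideal.span_mono (range_comp_subset_range Fin.castSucc x)
  refine ⟨ne_top_of_le_ne_top hx.1 hspan, fun i => ?_⟩
  have himage : x '' {j | j < i.castSucc} = Fin.init x '' {j | j < i} := by
    change x '' Iio i.castSucc = x ∘ Fin.castSucc '' Iio i
    rw [image_comp, Fin.image_castSucc_Iio]
  rw [← himage]
  exact hx.2 i.castSucc

lemma isSMulRegular_last (hx : IsRegSeq x) :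
    IsSMulRegular (R ⧸ Ideal.span (range (Fin.init x))) (x (Fin.last p)) := by
  have himage : x '' {j | j < Fin.last p} = range (Fin.init x) := by
    change x '' Iio (Fin.last p) = range (x ∘ Fin.castSucc)
    rw [range_comp, Fin.range_castSucc]
    rfl
  rw [isSMulRegular_quotient_iff_mem_of_smul_mem, ← himage]
  intro r hr
  exact hx.2 _ r (by rwa [mul_comm])

end IsRegSeq

lemma IsRegSeq.isMonomiallyIndependent {x : Fin p → R} (hx : IsRegSeq x) :
    IsMonomiallyIndependent x := by
  induction p with
  | zero =>
    intro a c hc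
    have hempty : (Iic a)ᶜ = ∅ := compl_empty_iff.2 (eq_univ_of_forall fun b => Subsingleton.le b a)
    simpa [hempty, monomialIdeal, mono] using hc
  | succ p ih => exact (ih hx.init).of_init hx.isSMulRegular_last

section Uniqueness

variable {x : Fin p → R} {f : R} {A B : Finset (Fin p → ℕ)}

lemma IsMinMonRep.isAntichain (hA : IsMinMonRep x f A) :
    IsAntichain (· ≤ ·) (A : Set (Fin p → ℕ)) :=
  fun a ha b hb hne hab => hA.2 a ha b hb hne (mono_dvd_mono x hab)

lemma IsMonRep.exists_le_of_isAntichain (hx : IsMonomiallyIndependent x)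
    (hprime : (Ideal.span (range x)).IsPrime) (hA : IsMonRep x f A)
    (hanti : IsAntichain (· ≤ ·) (A : Set (Fin p → ℕ))) (hB : IsMonRep x f B)
    {a : Fin p → ℕ} (ha : a ∈ A) : ∃ b ∈ B, b ≤ a := by
  classical
  obtain ⟨h, r, -, hr, hf⟩ := hA
  obtain ⟨h', s, hh', -, hf'⟩ := hB
  by_contra! hBa
  have hAa (b) (hb : b ∈ A.erase a) : ¬b ≤ a :=
    hanti (Finset.mem_of_mem_erase hb) ha (Finset.ne_of_mem_erase hb)
  have hcross : h' * r a * mono x a =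
      h * ∑ b ∈ B, s b * mono x b - h' * ∑ b ∈ A.erase a, r b * mono x b := by
    rw [← Finset.add_sum_erase A _ ha] at hf
    linear_combination h * hf' - h' * hf
  have hmem : h' * r a ∈ Ideal.span (range x) := by
    refine hx a _ (hcross ▸ Ideal.sub_mem _ ?_ ?_)
    · exact Ideal.mul_mem_left _ _ (sum_mul_mono_mem_monomialIdeal x hBa s)
    · exact Ideal.mul_mem_left _ _ (sum_mul_mono_mem_monomialIdeal x hAa r)
  exact (hprime.mem_or_mem hmem).elim hh' (hr a ha)

lemma IsMinMonRep.upperClosure_le (hx : IsMonomiallyIndependent x)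
    (hprime : (Ideal.span (range x)).IsPrime) (hA : IsMinMonRep x f A) (hB : IsMonRep x f B) :
    upperClosure (B : Set (Fin p → ℕ)) ≤ upperClosure (A : Set (Fin p → ℕ)) :=
  le_upperClosure.2 fun _ ha => hA.1.exists_le_of_isAntichain hx hprime hA.isAntichain hB ha

end Uniqueness

theorem minimal_monomial_representation_unique_general (x : Fin p → R) (hx : IsRegSeq x)
    (hprime : (Ideal.span (range x)).IsPrime) (f : R) (A B : Finset (Fin p → ℕ))
    (hA : IsMinMonRep x f A) (hB : IsMinMonRep x f B) : A = B := by
  have hind := hx.isMonomiallyIndependent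
  have hclosure : upperClosure (A : Set (Fin p → ℕ)) = upperClosure (B : Set (Fin p → ℕ)) :=
    le_antisymm (hB.upperClosure_le hind hprime hA.1) (hA.upperClosure_le hind hprime hB.1)
  ext a
  simp only [← Finset.mem_coe]
  rw [← hA.isAntichain.minimal_mem_upperClosure_iff_mem, hclosure,
    hB.isAntichain.minimal_mem_upperClosure_iff_mem]

/-- uniqueness of the minimal monomial representation. -/
theorem minimal_monomial_representation_unique {R : Type*} [CommRing R] {p : ℕ}
    (x : Fin p → R) (hR : IsRegularDomain R) (hx : IsGRSOP x) (f : R)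
    (A B : Finset (Fin p → ℕ)) (hA : IsMinMonRep x f A) (hB : IsMinMonRep x f B) :
    A = B := by
  have hprime := (Ideal.Quotient.isDomain_iff_prime _).1 (hx.2 univ).1
  rw [image_univ] at hprime
  exact minimal_monomial_representation_unique_general x (hx.1 1) hprime f A B hA hB

end NND
end
end

section
/- Let R be a regular domain with a generalized regular system of parameters x = x_1,…,x_p, and let g, h ∈ R. Then Γ_x(gh) = Γ_x(g) + Γ_x(h), where + denotes the Minkowski sum. -/
open Ideal Set Pointwise

noncomputable section

namespace NND

variable {R : Type*} [CommRing R] {p : ℕ}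

/-!
Let `Q = (x_1, …, x_p)`. Regularity of `x` in every order shows that the class of `x^e` modulo the
box ideal `(x_1^{e_1+1}, …, x_p^{e_p+1})` has annihilator exactly `Q`. Hence the coefficient of
`x^e` in a sum of monomial terms, no other one of which divides `x^e`, is detected modulo `Q` by the
box ideal at `e`, and `supp f` is the set of minimal elements of the upper set `N(f)` (`upperSupp`)
of all `e` such that `f` is not in the box ideal at `e` locally at `Q`. Existence of monomial
representations is Krull's intersection theorem in `R_Q`. Thus `Γ_x(f)` is the convex hull of
`N(f)`, and expanding a product gives `N(gh) ⊆ N(g) + N(h)`. Conversely, for a weight `w`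
nonnegative on exponents, the product of the terms of `g` and `h` that are smallest for `w`, with
ties broken lexicographically, cannot cancel. So the minimum of `w` on `N(gh)` is at most the sum of
its minima on `N(g)` and `N(h)`; separating a point from the closed convex set `Γ_x(gh)` by a
hyperplane turns this into the missing inclusion.
-/

/-! ### Sequences that are regular in every order -/

section PermutablyRegular

variable {ι : Type*}

lemma isSMulRegular_quotient_span_pow_sup {I : Ideal R} {y z : R}
    (hy : IsSMulRegular (R ⧸ I) y) (hz : IsSMulRegular (R ⧸ span {y} ⊔ I) z) (n : ℕ) :
    IsSMulRegular (R ⧸ span {y ^ n} ⊔ I) z := by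
  simp only [isSMulRegular_quotient_iff_mem_of_smul_mem, smul_eq_mul] at hy hz ⊢
  induction n with
  | zero => simp
  | succ n ih =>
    intro r hzr
    have hle : span {y ^ (n + 1)} ⊔ I ≤ span {y} ⊔ I :=
      sup_le_sup_right (span_singleton_le_span_singleton.2 (dvd_pow_self y n.succ_ne_zero)) I
    obtain ⟨t, b, hb, rfl⟩ := mem_span_singleton_sup.1 (hz r (hle hzr))
    obtain ⟨s, c, hc, hs⟩ := mem_span_singleton_sup.1 hzr
    have hzt : z * t - s * y ^ n ∈ I := by
      refine hy _ ?_
      have : y * (z * t - s * y ^ n) = c - z * b := by linear_combination -hs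
      exact this ▸ I.sub_mem hc (I.mul_mem_left z hb)
    obtain ⟨q, d, hd, rfl⟩ := mem_span_singleton_sup.1
      (ih t (mem_span_singleton_sup.2 ⟨s, _, hzt, by ring⟩))
    exact mem_span_singleton_sup.2
      ⟨q, d * y + b, I.add_mem (I.mul_mem_right y hd) hb, by ring⟩

lemma mem_span_sup_of_mul_pow_mem_span_pow_succ_sup {I : Ideal R} {y u : R}
    (hy : IsSMulRegular (R ⧸ I) y) {n : ℕ} (hu : u * y ^ n ∈ span {y ^ (n + 1)} ⊔ I) :
    u ∈ span {y} ⊔ I := by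
  obtain ⟨s, b, hb, hs⟩ := mem_span_singleton_sup.1 hu
  have hmem : y ^ n * (u - s * y) ∈ I := by
    have : y ^ n * (u - s * y) = b := by linear_combination -hs
    exact this ▸ hb
  exact mem_span_singleton_sup.2
    ⟨s, u - s * y, mem_of_isSMulRegular_quotient_of_smul_mem (hy.pow n) hmem, by ring⟩

/-- A family which is a weakly regular sequence in every order: each member is a nonzerodivisor
modulo any set of other members. -/
def IsPermutablyRegular (x : ι → R) : Prop :=
  ∀ (T : Set ι) (i : ι), i ∉ T → IsSMulRegular (R ⧸ span (x '' T)) (x i)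

/-- The ideal generated by the `x i` with `i ∈ T` and the powers `x i ^ (e i + 1)` with `i ∈ S`. It
interpolates between `(x)` and the ideal of the powers, which allows induction on `S`. -/
def mixedIdeal (x : ι → R) (e : ι → ℕ) (T S : Set ι) : Ideal R :=
  span (x '' T) ⊔ span ((fun i => x i ^ (e i + 1)) '' S)

lemma mixedIdeal_empty_right (x : ι → R) (e : ι → ℕ) (T : Set ι) :
    mixedIdeal x e T ∅ = span (x '' T) := by
  rw [mixedIdeal, image_empty, span_empty, sup_bot_eq]

lemma mixedIdeal_insert_left (x : ι → R) (e : ι → ℕ) (k : ι) (T S : Set ι) :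
    mixedIdeal x e (insert k T) S = span {x k} ⊔ mixedIdeal x e T S := by
  rw [mixedIdeal, mixedIdeal, image_insert_eq, span_insert, sup_assoc]

lemma mixedIdeal_insert_right (x : ι → R) (e : ι → ℕ) (k : ι) (T S : Set ι) :
    mixedIdeal x e T (insert k S) = span {x k ^ (e k + 1)} ⊔ mixedIdeal x e T S := by
  rw [mixedIdeal, mixedIdeal, image_insert_eq, span_insert, sup_left_comm]

lemma IsPermutablyRegular.isSMulRegular_quotient_mixedIdeal {x : ι → R}
    (hx : IsPermutablyRegular x) (e : ι → ℕ) (S : Finset ι) {T : Set ι} (hTS : Disjoint T ↑S)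
    {i : ι} (hiT : i ∉ T) (hiS : i ∉ S) : IsSMulRegular (R ⧸ mixedIdeal x e T S) (x i) := by
  classical
  induction S using Finset.induction_on generalizing T i with
  | empty =>
    rw [Finset.coe_empty, mixedIdeal_empty_right]
    exact hx T i hiT
  | insert k S hkS ih =>
    rw [Finset.coe_insert, disjoint_insert_right] at hTS
    rw [Finset.mem_insert, not_or] at hiS
    have hk := ih hTS.2 hTS.1 hkS
    have hi := ih (T := insert k T) (disjoint_insert_left.2 ⟨hkS, hTS.2⟩)
      (by simp [hiS.1, hiT]) hiS.2
    rw [mixedIdeal_insert_left] at hi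
    rw [Finset.coe_insert, mixedIdeal_insert_right]
    exact isSMulRegular_quotient_span_pow_sup hk hi _

lemma IsPermutablyRegular.mem_span_of_mul_prod_pow_mem_mixedIdeal {x : ι → R}
    (hx : IsPermutablyRegular x) {e : ι → ℕ} {S : Finset ι} {T : Set ι} (hTS : Disjoint T ↑S)
    {u : R} (hu : u * ∏ i ∈ S, x i ^ e i ∈ mixedIdeal x e T S) : u ∈ span (x '' (T ∪ S)) := by
  classical
  induction S using Finset.induction_on generalizing T with
  | empty => simpa [mixedIdeal_empty_right] using hu
  | insert k S hkS ih =>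
    rw [Finset.coe_insert, disjoint_insert_right] at hTS
    rw [Finset.prod_insert hkS, mul_left_comm, mul_comm, Finset.coe_insert,
      mixedIdeal_insert_right] at hu
    have hk := hx.isSMulRegular_quotient_mixedIdeal e S hTS.2 hTS.1 hkS
    rw [Finset.coe_insert, union_insert, ← insert_union]
    refine ih (disjoint_insert_left.2 ⟨hkS, hTS.2⟩) ?_
    rw [mixedIdeal_insert_left]
    exact mem_span_sup_of_mul_pow_mem_span_pow_succ_sup hk hu

end PermutablyRegular

/-! ### Monomials and box ideals -/

section Box

lemma mono_add (x : Fin p → R) (a b : Fin p → ℕ) : mono x (a + b) = mono x a * mono x b := by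
  simp only [mono, Pi.add_apply, pow_add, Finset.prod_mul_distrib]

lemma mono_image_add (x : Fin p → R) (s t : Set (Fin p → ℕ)) :
    mono x '' (s + t) = mono x '' s * mono x '' t :=
  image_image2_distrib (mono_add x)

lemma mono_dvd_mono_of_le (x : Fin p → R) {a b : Fin p → ℕ} (h : a ≤ b) : mono x a ∣ mono x b :=
  Finset.prod_dvd_prod_of_dvd _ _ fun i _ => pow_dvd_pow (x i) (h i)

lemma mono_mem_span_pow (x : Fin p → R) (a : Fin p → ℕ) :
    mono x a ∈ span (range x) ^ ∑ i, a i := by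
  rw [← Finset.prod_pow_eq_pow_sum]
  exact Ideal.prod_mem_prod fun i _ => Ideal.pow_mem_pow (subset_span (mem_range_self i)) _

lemma map_mono {S : Type*} [CommRing S] (φ : R →+* S) (x : Fin p → R) (a : Fin p → ℕ) :
    φ (mono x a) = mono (φ ∘ x) a := by
  simp only [mono, map_prod, map_pow, Function.comp_apply]

lemma map_span_mono_image {S : Type*} [CommRing S] (φ : R →+* S) (x : Fin p → R)
    (C : Set (Fin p → ℕ)) : (span (mono x '' C)).map φ = span (mono (φ ∘ x) '' C) := by
  simp only [map_span, image_image, map_mono]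

/-- The ideal `(x_1^{e_1+1}, …, x_p^{e_p+1})`. When `x` consists of indeterminates, it is spanned by
the monomials that do not divide `x^e`. -/
def boxIdeal (x : Fin p → R) (e : Fin p → ℕ) : Ideal R :=
  span (range fun i => x i ^ (e i + 1))

lemma pow_succ_mem_boxIdeal (x : Fin p → R) (e : Fin p → ℕ) (i : Fin p) :
    x i ^ (e i + 1) ∈ boxIdeal x e :=
  subset_span (mem_range_self i)

lemma map_boxIdeal {S : Type*} [CommRing S] (φ : R →+* S) (x : Fin p → R) (e : Fin p → ℕ) :
    (boxIdeal x e).map φ = boxIdeal (φ ∘ x) e := by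
  simp only [boxIdeal, map_span, ← range_comp, Function.comp_def, map_pow]

lemma boxIdeal_antitone (x : Fin p → R) : Antitone (boxIdeal x) := fun a b hab => by
  refine span_le.2 (range_subset_iff.2 fun i => ?_)
  exact mem_of_dvd _ (pow_dvd_pow _ (Nat.add_le_add_right (hab i) 1)) (pow_succ_mem_boxIdeal x a i)

lemma mono_mem_boxIdeal (x : Fin p → R) {c e : Fin p → ℕ} (h : ¬ c ≤ e) :
    mono x c ∈ boxIdeal x e := by
  simp only [Pi.le_def, not_forall, not_le] at h
  obtain ⟨i, hi⟩ := h
  refine mem_of_dvd _ ?_ (pow_succ_mem_boxIdeal x e i)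
  exact (pow_dvd_pow _ hi).trans (Finset.dvd_prod_of_mem (fun i => x i ^ c i) (Finset.mem_univ i))

lemma span_mono_image_le_boxIdeal (x : Fin p → R) {C : Set (Fin p → ℕ)} {e : Fin p → ℕ}
    (h : ∀ c ∈ C, ¬ c ≤ e) : span (mono x '' C) ≤ boxIdeal x e :=
  span_le.2 (image_subset_iff.2 fun c hc => mono_mem_boxIdeal x (h c hc))

lemma mul_mono_mem_boxIdeal (x : Fin p → R) {u : R} (hu : u ∈ span (range x)) (e : Fin p → ℕ) :
    u * mono x e ∈ boxIdeal x e := by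
  rw [mul_comm]
  suffices h : span (range x) ≤ Submodule.comap (LinearMap.mulLeft R (mono x e)) (boxIdeal x e) from
    h hu
  refine span_le.2 (range_subset_iff.2 fun i => ?_)
  have hdvd : x i ^ (e i + 1) ∣ mono x e * x i := by
    rw [pow_succ]
    exact mul_dvd_mul_right (Finset.dvd_prod_of_mem (fun i => x i ^ e i) (Finset.mem_univ i)) (x i)
  exact mem_of_dvd (boxIdeal x e) hdvd (pow_succ_mem_boxIdeal x e i)

end Box

/-! ### Independence of monomials over `R ⧸ (x)` -/

/-- The monomials in `x` are independent modulo `(x)`: the class of `x^e` modulo the box ideal at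
`e` is annihilated only by elements of `(x)`. -/
def MonomiallyIndependent (x : Fin p → R) : Prop :=
  ∀ (e : Fin p → ℕ) (u : R), u * mono x e ∈ boxIdeal x e → u ∈ span (range x)

lemma IsPermutablyRegular.monomiallyIndependent {x : Fin p → R} (hx : IsPermutablyRegular x) :
    MonomiallyIndependent x := by
  intro e u hu
  have := hx.mem_span_of_mul_prod_pow_mem_mixedIdeal (e := e) (S := Finset.univ)
    (empty_disjoint _) (by simpa [mixedIdeal, boxIdeal, mono] using hu)
  simpa using this

lemma sum_eq_of_mem_support {P : MvPolynomial (Fin p) R} {n : ℕ} (hP : P.IsHomogeneous n)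
    {d : Fin p →₀ ℕ} (hd : d ∈ P.support) : ∑ i, d i = n := by
  rw [← Finsupp.degree_eq_sum, Finsupp.degree_eq_weight_one]
  exact hP (MvPolynomial.mem_support_iff.1 hd)

namespace MonomiallyIndependent

variable {x : Fin p → R} {a b : Fin p → ℕ}

lemma coeff_mem (hx : MonomiallyIndependent x) {ι : Type*} {t : Finset ι} {m : ι → Fin p → ℕ}
    {c : ι → R} {i : ι} (hi : i ∈ t) (hm : ∀ j ∈ t, j ≠ i → ¬ m j ≤ m i)
    (hs : ∑ j ∈ t, c j * mono x (m j) ∈ boxIdeal x (m i)) : c i ∈ span (range x) := by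
  classical
  rw [← Finset.add_sum_erase t _ hi] at hs
  refine hx (m i) (c i) ((Ideal.add_mem_iff_left _ ?_).1 hs)
  refine sum_mem fun j hj => mul_mem_left _ _ (mono_mem_boxIdeal x ?_)
  exact hm j (Finset.mem_of_mem_erase hj) (Finset.ne_of_mem_erase hj)

lemma mono_dvd_mono_iff [hQ : (span (range x)).IsPrime] (hx : MonomiallyIndependent x) :
    mono x a ∣ mono x b ↔ a ≤ b := by
  refine ⟨fun hdvd => ?_, mono_dvd_mono_of_le x⟩
  by_contra hab
  have hb : 1 * mono x b ∈ boxIdeal x b := by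
    rw [one_mul]
    exact mem_of_dvd _ hdvd (mono_mem_boxIdeal x hab)
  exact hQ.one_notMem (hx b 1 hb)

lemma localization [hQ : (span (range x)).IsPrime] (hx : MonomiallyIndependent x) :
    MonomiallyIndependent (algebraMap R (Localization.AtPrime (span (range x))) ∘ x) := by
  intro e u hu
  obtain ⟨r, s, rfl⟩ := IsLocalization.exists_mk'_eq (span (range x)).primeCompl u
  rw [← map_boxIdeal, ← map_mono, mul_comm, IsLocalization.mul_mk'_eq_mk'_of_mul,
    IsLocalization.mk'_mem_map_algebraMap_iff] at hu
  obtain ⟨k, hk, hkr⟩ := hu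
  have hkr' : k * r ∈ span (range x) := hx e _ (by convert hkr using 1; ring)
  rw [range_comp, ← map_span, IsLocalization.mk'_mem_map_algebraMap_iff]
  exact ⟨k, hk, hkr'⟩

lemma coeff_mem_of_isHomogeneous (hx : MonomiallyIndependent x) {P : MvPolynomial (Fin p) R}
    {n : ℕ} (hP : P.IsHomogeneous n) {d : Fin p →₀ ℕ} (hd : P.eval x ∈ boxIdeal x d) :
    P.coeff d ∈ span (range x) := by
  by_cases hdP : d ∈ P.support
  · rw [MvPolynomial.eval_eq'] at hd
    refine hx.coeff_mem (m := fun j : Fin p →₀ ℕ => ⇑j) (c := P.coeff) hdP ?_ hd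
    intro j hj hjd hle
    have hsum : ∑ i, j i = ∑ i, d i :=
      (sum_eq_of_mem_support hP hj).trans (sum_eq_of_mem_support hP hdP).symm
    exact hjd (Finsupp.ext fun i =>
      (Finset.sum_eq_sum_iff_of_le fun i _ => hle i).1 hsum i (Finset.mem_univ i))
  · rw [MvPolynomial.notMem_support_iff.1 hdP]
    exact zero_mem _

lemma mem_span_mono_sup_pow (hx : MonomiallyIndependent x) (f : R) (n : ℕ) :
    f ∈ span (mono x '' {a | f ∉ boxIdeal x a}) ⊔ span (range x) ^ n := by
  set W := span (mono x '' {a | f ∉ boxIdeal x a})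
  have hW {d : Fin p → ℕ} (hd : f ∈ boxIdeal x d) : W ≤ boxIdeal x d :=
    span_mono_image_le_boxIdeal x fun c hc hcd => hc (boxIdeal_antitone x hcd hd)
  induction n with
  | zero => simp
  | succ n ih =>
    obtain ⟨g, hg, s, hs, hgs⟩ := Submodule.mem_sup.1 ih
    obtain ⟨P, hP, rfl⟩ := (mem_span_pow_iff_exists_isHomogeneous x s).1 hs
    suffices hP' : P.eval x ∈ W ⊔ span (range x) ^ (n + 1) from
      hgs ▸ Ideal.add_mem _ (mem_sup_left hg) hP'
    rw [MvPolynomial.eval_eq']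
    refine sum_mem fun d hd => ?_
    -- A term whose monomial is not one of the generators of `W` has its coefficient in `(x)`, so
    -- it has order at least `n + 1`.
    by_cases hfd : f ∈ boxIdeal x d
    · have hPd : P.eval x ∈ boxIdeal x d :=
        (Ideal.add_mem_iff_right _ (hW hfd hg)).1 (hgs ▸ hfd)
      refine mem_sup_right ?_
      rw [pow_succ', ← sum_eq_of_mem_support hP hd]
      exact mul_mem_mul (hx.coeff_mem_of_isHomogeneous hP hPd) (mono_mem_span_pow x d)
    · exact mem_sup_left (mul_mem_left _ _ (subset_span ⟨d, hfd, rfl⟩))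

end MonomiallyIndependent

/-! ### Krull's intersection theorem -/

lemma mem_of_forall_mem_sup_pow {L : Type*} [CommRing L] [IsNoetherianRing L] [IsLocalRing L]
    {I W : Ideal L} (hI : I ≠ ⊤) {f : L} (hf : ∀ n, f ∈ W ⊔ I ^ n) : f ∈ W := by
  rw [← Ideal.Quotient.eq_zero_iff_mem, ← Submodule.mem_bot L,
    ← Ideal.iInf_pow_smul_eq_bot_of_isLocalRing I hI, Submodule.mem_iInf]
  intro n
  obtain ⟨g, hg, s, hs, rfl⟩ := Submodule.mem_sup.1 (hf n)
  have hmk : Ideal.Quotient.mk W (g + s) = s • (1 : L ⧸ W) := by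
    rw [map_add, Ideal.Quotient.eq_zero_iff_mem.2 hg, zero_add, Algebra.smul_def, mul_one]
    rfl
  exact hmk ▸ Submodule.smul_mem_smul hs trivial

lemma MonomiallyIndependent.mem_span_mono_image {L : Type*} [CommRing L] [IsNoetherianRing L]
    [IsLocalRing L] {x : Fin p → L} (hx : MonomiallyIndependent x) (hQ : span (range x) ≠ ⊤)
    (f : L) : f ∈ span (mono x '' {a | f ∉ boxIdeal x a}) :=
  mem_of_forall_mem_sup_pow hQ (hx.mem_span_mono_sup_pow f)

/-! ### The upper set of exponents of an element -/

/-- The exponents `e` such that `f` does not lie in the box ideal at `e` locally at `(x)`. Its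
minimal elements form the support of `f`, but unlike the support it is defined without choosing a
representation. -/
def upperSupp (x : Fin p → R) (f : R) : Set (Fin p → ℕ) :=
  {e | ∀ h ∉ span (range x), h * f ∉ boxIdeal x e}

section UpperSupp

variable {x : Fin p → R} {f h : R}

lemma isUpperSet_upperSupp (x : Fin p → R) (f : R) : IsUpperSet (upperSupp x f) :=
  fun _ _ hab ha h hh hb => ha h hh (boxIdeal_antitone x hab hb)

lemma upperSupp_mul_subset (x : Fin p → R) (t f : R) : upperSupp x (t * f) ⊆ upperSupp x f :=
  fun _ he h hh hf => he h hh (mul_left_comm t h f ▸ mul_mem_left _ t hf)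

lemma exists_le_of_mem_upperSupp {C : Set (Fin p → ℕ)} (hh : h ∉ span (range x))
    (hf : h * f ∈ span (mono x '' C)) {e : Fin p → ℕ} (he : e ∈ upperSupp x f) :
    ∃ c ∈ C, c ≤ e := by
  by_contra! hC
  exact he h hh (span_mono_image_le_boxIdeal x hC hf)

lemma IsMonRep.exists_le_of_mem_upperSupp {A : Finset (Fin p → ℕ)} (hA : IsMonRep x f A)
    {e : Fin p → ℕ} (he : e ∈ upperSupp x f) : ∃ a ∈ A, a ≤ e := by
  obtain ⟨h, r, hh, -, hf⟩ := hA
  refine NND.exists_le_of_mem_upperSupp hh (hf ▸ sum_mem fun a ha => ?_) he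
  exact mul_mem_left _ _ (subset_span (mem_image_of_mem _ ha))

lemma MonomiallyIndependent.mem_upperSupp [hQ : (span (range x)).IsPrime]
    (hx : MonomiallyIndependent x) {ι : Type*} {t : Finset ι} {m : ι → Fin p → ℕ} {c : ι → R}
    (hf : h * f = ∑ j ∈ t, c j * mono x (m j)) {i : ι} (hi : i ∈ t) (hc : c i ∉ span (range x))
    (hm : ∀ j ∈ t, j ≠ i → ¬ m j ≤ m i) : m i ∈ upperSupp x f := by
  intro k hk hkf
  have hsum : ∑ j ∈ t, k * c j * mono x (m j) ∈ boxIdeal x (m i) := by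
    simp only [mul_assoc, ← Finset.mul_sum, ← hf]
    exact mul_left_comm h k f ▸ mul_mem_left _ h hkf
  exact (hQ.mem_or_mem (hx.coeff_mem (c := fun j => k * c j) hi hm hsum)).elim hk hc

variable [hQ : (span (range x)).IsPrime]

lemma mem_upperSupp_of_algebraMap_notMem {e : Fin p → ℕ}
    (he : algebraMap R (Localization.AtPrime (span (range x))) f ∉
      boxIdeal (algebraMap R (Localization.AtPrime (span (range x))) ∘ x) e) :
    e ∈ upperSupp x f := by
  intro h hh hf
  rw [← map_boxIdeal] at he
  exact he ((IsLocalization.algebraMap_mem_map_algebraMap_iff (span (range x)).primeCompl _ _ _).2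
    ⟨h, hh, hf⟩)

variable [IsNoetherianRing (Localization.AtPrime (span (range x)))]

lemma MonomiallyIndependent.exists_mul_mem_span_mono_upperSupp (hx : MonomiallyIndependent x)
    (f : R) : ∃ h ∉ span (range x), h * f ∈ span (mono x '' upperSupp x f) := by
  set L := Localization.AtPrime (span (range x))
  have hne : span (range (algebraMap R L ∘ x)) ≠ ⊤ := by
    rw [range_comp, ← map_span, Localization.AtPrime.map_eq_maximalIdeal]
    exact (IsLocalRing.maximalIdeal.isMaximal L).ne_top
  have hmem := hx.localization.mem_span_mono_image hne (algebraMap R L f)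
  have hle := span_mono (image_mono (t := upperSupp x f)
    fun _ => mem_upperSupp_of_algebraMap_notMem) hmem
  rw [← map_span_mono_image] at hle
  exact (IsLocalization.algebraMap_mem_map_algebraMap_iff (span (range x)).primeCompl _ _ _).1 hle

lemma MonomiallyIndependent.upperSupp_mul_subset_add (hx : MonomiallyIndependent x) (g h : R) :
    upperSupp x (g * h) ⊆ upperSupp x g + upperSupp x h := by
  intro e he
  obtain ⟨k, hk, hg⟩ := hx.exists_mul_mem_span_mono_upperSupp g
  obtain ⟨l, hl, hh⟩ := hx.exists_mul_mem_span_mono_upperSupp h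
  have hgh : k * l * (g * h) ∈ span (mono x '' (upperSupp x g + upperSupp x h)) := by
    rw [mono_image_add, ← span_mul_span', mul_mul_mul_comm]
    exact mul_mem_mul hg hh
  obtain ⟨c, ⟨a, ha, b, hb, rfl⟩, hce⟩ :=
    exists_le_of_mem_upperSupp (hQ.mul_notMem hk hl) hgh he
  obtain ⟨d, rfl⟩ := exists_add_of_le hce
  exact ⟨a, ha, b + d, isUpperSet_upperSupp x h le_self_add hb, (add_assoc a b d).symm⟩

end UpperSupp

/-! ### Minimal elements of sets of exponents -/

section Minimal

variable {α : Type*}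

lemma finite_setOf_minimal [PartialOrder α] [WellQuasiOrderedLE α] (s : Set α) :
    {a | Minimal (· ∈ s) a}.Finite :=
  WellQuasiOrderedLE.finite_of_isAntichain (setOfPred_minimal_antichain _)

lemma setOf_minimal_add_univ [AddCommMonoid α] [PartialOrder α] [CanonicallyOrderedAdd α]
    [WellFoundedLT α] {s : Set α} (hs : IsUpperSet s) : {a | Minimal (· ∈ s) a} + univ = s := by
  refine Subset.antisymm ?_ fun e he => ?_
  · rintro _ ⟨a, ha, d, -, rfl⟩
    exact hs le_self_add ha.1
  · obtain ⟨a, hae, ha⟩ := exists_minimal_le_of_wellFoundedLT (· ∈ s) e he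
    obtain ⟨d, rfl⟩ := exists_add_of_le hae
    exact add_mem_add ha (mem_univ d)

end Minimal

/-! ### The support and the Newton polyhedron -/

section Support

variable {x : Fin p → R} {f : R} [hQ : (span (range x)).IsPrime]

lemma MonomiallyIndependent.isMinMonRep_iff_isAntichain (hx : MonomiallyIndependent x)
    {A : Finset (Fin p → ℕ)} :
    IsMinMonRep x f A ↔ IsMonRep x f A ∧ IsAntichain (· ≤ ·) (A : Set (Fin p → ℕ)) := by
  simp only [IsMinMonRep, hx.mono_dvd_mono_iff]
  rfl

lemma MonomiallyIndependent.mem_iff_minimal_upperSupp (hx : MonomiallyIndependent x)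
    {A : Finset (Fin p → ℕ)} (hA : IsMinMonRep x f A) {a : Fin p → ℕ} :
    a ∈ A ↔ Minimal (· ∈ upperSupp x f) a := by
  obtain ⟨⟨h, r, -, hr, hf⟩, hanti⟩ := hx.isMinMonRep_iff_isAntichain.1 hA
  have hsub {b} (hb : b ∈ A) : b ∈ upperSupp x f :=
    hx.mem_upperSupp (m := id) hf hb (hr b hb) fun j hj hjb => hanti hj hb hjb
  refine ⟨fun ha => ⟨hsub ha, fun e he hea => ?_⟩, fun ha => ?_⟩
  · obtain ⟨b, hb, hbe⟩ := hA.1.exists_le_of_mem_upperSupp he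
    exact hanti.eq hb ha (hbe.trans hea) ▸ hbe
  · obtain ⟨b, hb, hba⟩ := hA.1.exists_le_of_mem_upperSupp ha.1
    exact ha.eq_of_le (hsub hb) hba ▸ hb

variable [IsNoetherianRing (Localization.AtPrime (span (range x)))]

lemma MonomiallyIndependent.exists_isMinMonRep (hx : MonomiallyIndependent x) (f : R) :
    ∃ A : Finset (Fin p → ℕ), IsMinMonRep x f A := by
  obtain ⟨A, hA⟩ := (finite_setOf_minimal (upperSupp x f)).exists_finset_coe
  have hmin {a} (ha : a ∈ A) : Minimal (· ∈ upperSupp x f) a := by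
    rwa [← Finset.mem_coe, hA] at ha
  have hanti : IsAntichain (· ≤ ·) (A : Set (Fin p → ℕ)) := hA ▸ setOfPred_minimal_antichain _
  obtain ⟨h, hh, hf⟩ := hx.exists_mul_mem_span_mono_upperSupp f
  have hfA : h * f ∈ span (mono x '' A) := by
    refine span_le.2 (image_subset_iff.2 fun e he => ?_) hf
    rw [← setOf_minimal_add_univ (isUpperSet_upperSupp x f), ← hA] at he
    obtain ⟨a, ha, d, -, rfl⟩ := he
    exact mem_of_dvd _ (mono_dvd_mono_of_le x le_self_add) (subset_span (mem_image_of_mem _ ha))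
  obtain ⟨c, hc⟩ := (Submodule.mem_span_image_finset_iff_exists_fun' R).1 hfA
  simp only [smul_eq_mul] at hc
  refine ⟨A, hx.isMinMonRep_iff_isAntichain.2 ⟨⟨h, c, hh, fun a ha hca => ?_, hc.symm⟩, hanti⟩⟩
  refine (hmin ha).1 h hh (hc ▸ sum_mem fun b hb => ?_)
  rcases eq_or_ne b a with rfl | hba
  · exact mul_mono_mem_boxIdeal x hca b
  · exact mul_mem_left _ _ (mono_mem_boxIdeal x (hanti hb ha hba))

lemma MonomiallyIndependent.supp_eq_setOf_minimal (hx : MonomiallyIndependent x) (f : R) :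
    supp x f = {a | Minimal (· ∈ upperSupp x f) a} := by
  have hex := hx.exists_isMinMonRep f
  rw [supp, dif_pos hex]
  exact Set.ext fun a => hx.mem_iff_minimal_upperSupp hex.choose_spec

lemma MonomiallyIndependent.upperSupp_mono_mul (hx : MonomiallyIndependent x) (d : Fin p → ℕ)
    (f : R) : upperSupp x (mono x d * f) = d +ᵥ upperSupp x f := by
  refine Subset.antisymm (fun e he => ?_) ?_
  · obtain ⟨a, ha, b, hb, rfl⟩ := hx.upperSupp_mul_subset_add _ _ he
    obtain ⟨_, rfl, hda⟩ := exists_le_of_mem_upperSupp (C := {d}) hQ.one_notMem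
      (subset_span ⟨d, rfl, (one_mul _).symm⟩) ha
    obtain ⟨r, rfl⟩ := exists_add_of_le hda
    exact ⟨r + b, isUpperSet_upperSupp x f le_add_self hb, (add_assoc _ r b).symm⟩
  · rintro _ ⟨e, he, rfl⟩
    obtain ⟨a, hae, ha⟩ := exists_minimal_le_of_wellFoundedLT (· ∈ upperSupp x f) e he
    obtain ⟨A, hA⟩ := hx.exists_isMinMonRep f
    have haA := (hx.mem_iff_minimal_upperSupp hA).2 ha
    obtain ⟨⟨h, r, -, hr, hf⟩, hanti⟩ := hx.isMinMonRep_iff_isAntichain.1 hA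
    have hdf : h * (mono x d * f) = ∑ b ∈ A, r b * mono x (d + b) := by
      simp only [mono_add, mul_left_comm _ (mono x d), ← Finset.mul_sum, hf]
    refine isUpperSet_upperSupp x _ (add_le_add_right hae d)
      (hx.mem_upperSupp (m := (d + ·)) hdf haA (hr a haA) fun b hb hba hle => ?_)
    exact hanti hb haA hba (le_of_add_le_add_left hle)

lemma MonomiallyIndependent.iUnion_supp_eq_upperSupp (hx : MonomiallyIndependent x) (f : R) :
    ⋃ g ∈ (span {f} : Set R), supp x g = upperSupp x f := by
  simp only [hx.supp_eq_setOf_minimal]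
  refine Subset.antisymm (iUnion₂_subset fun g hg e he => ?_) fun e he => ?_
  · obtain ⟨t, rfl⟩ := mem_span_singleton'.1 hg
    exact upperSupp_mul_subset x t f he.1
  · obtain ⟨a, hae, ha⟩ := exists_minimal_le_of_wellFoundedLT (· ∈ upperSupp x f) e he
    obtain ⟨d, rfl⟩ := le_iff_exists_add'.1 hae
    refine mem_iUnion₂.2 ⟨mono x d * f, mem_span_singleton'.2 ⟨_, rfl⟩, ?_⟩
    rw [hx.upperSupp_mono_mul]
    refine ⟨⟨a, ha.1, rfl⟩, ?_⟩
    rintro _ ⟨b, hb, rfl⟩ hba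
    exact add_le_add_right (ha.2 hb (le_of_add_le_add_left hba)) d

lemma MonomiallyIndependent.ΓE_eq_convexHull (hx : MonomiallyIndependent x) (f : R) :
    ΓE x f = convexHull ℝ (toR '' upperSupp x f) := by
  rw [ΓE, ΓI, Γ, hx.iUnion_supp_eq_upperSupp]

end Support

/-! ### Leading terms of products -/

section Weight

variable {M : Type*} [AddCommMonoid M]

/-- The key of an exponent for the order by the weight `w`, with ties broken lexicographically. -/
def weightLex (w : (Fin p → ℕ) →+ M) (c : Fin p → ℕ) : M ×ₗ Lex (Fin p → ℕ) :=
  toLex (w c, toLex c)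

lemma weightLex_add (w : (Fin p → ℕ) →+ M) (a b : Fin p → ℕ) :
    weightLex w (a + b) = weightLex w a + weightLex w b := by
  rw [weightLex, map_add]
  rfl

lemma weightLex_injective (w : (Fin p → ℕ) →+ M) : Function.Injective (weightLex w) :=
  fun _ _ hab => toLex_inj.1 (congrArg Prod.snd (toLex_inj.1 hab))

variable [LinearOrder M]

lemma weightLex_monotone {w : (Fin p → ℕ) →+ M} (hw : Monotone w) : Monotone (weightLex w) :=
  fun _ _ hab => Prod.Lex.toLex_mono (Prod.mk_le_mk.2 ⟨hw hab, Pi.toLex_monotone hab⟩)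

lemma le_of_weightLex_le {w : (Fin p → ℕ) →+ M} {a b : Fin p → ℕ}
    (hab : weightLex w a ≤ weightLex w b) : w a ≤ w b :=
  Prod.Lex.monotone_fst _ _ hab

variable [IsOrderedCancelAddMonoid M]

lemma exists_min_weight_add_le_imp_eq {w : (Fin p → ℕ) →+ M} (hw : Monotone w)
    {A B : Finset (Fin p → ℕ)} (hA : A.Nonempty) (hB : B.Nonempty) :
    ∃ a₀ ∈ A, ∃ b₀ ∈ B, (∀ a ∈ A, w a₀ ≤ w a) ∧ (∀ b ∈ B, w b₀ ≤ w b) ∧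
      ∀ a ∈ A, ∀ b ∈ B, a + b ≤ a₀ + b₀ → a = a₀ ∧ b = b₀ := by
  obtain ⟨a₀, ha₀, hminA⟩ := A.exists_min_image (weightLex w) hA
  obtain ⟨b₀, hb₀, hminB⟩ := B.exists_min_image (weightLex w) hB
  refine ⟨a₀, ha₀, b₀, hb₀, fun a ha => le_of_weightLex_le (hminA a ha),
    fun b hb => le_of_weightLex_le (hminB b hb), fun a ha b hb hab => ?_⟩
  have hsum := weightLex_monotone hw hab
  rw [weightLex_add, weightLex_add] at hsum
  have heq := (add_eq_add_iff_eq_and_eq (hminA a ha) (hminB b hb)).1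
    (hsum.antisymm' (add_le_add (hminA a ha) (hminB b hb)))
  exact ⟨(weightLex_injective w heq.1).symm, (weightLex_injective w heq.2).symm⟩

lemma MonomiallyIndependent.exists_mem_upperSupp_mul_weight_le {x : Fin p → R}
    [hQ : (span (range x)).IsPrime] [IsNoetherianRing (Localization.AtPrime (span (range x)))]
    (hx : MonomiallyIndependent x) {w : (Fin p → ℕ) →+ M} (hw : Monotone w) {g h : R}
    {a b : Fin p → ℕ} (ha : a ∈ upperSupp x g) (hb : b ∈ upperSupp x h) :
    ∃ c ∈ upperSupp x (g * h), w c ≤ w (a + b) := by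
  obtain ⟨A, hA, -⟩ := hx.exists_isMinMonRep g
  obtain ⟨B, hB, -⟩ := hx.exists_isMinMonRep h
  obtain ⟨a', ha', haa⟩ := hA.exists_le_of_mem_upperSupp ha
  obtain ⟨b', hb', hbb⟩ := hB.exists_le_of_mem_upperSupp hb
  obtain ⟨a₀, ha₀, b₀, hb₀, hminA, hminB, hlead⟩ :=
    exists_min_weight_add_le_imp_eq hw ⟨a', ha'⟩ ⟨b', hb'⟩
  obtain ⟨k, r, -, hr, hg⟩ := hA
  obtain ⟨l, s, -, hs, hh⟩ := hB
  have hgh : k * l * (g * h) = ∑ q ∈ A ×ˢ B, r q.1 * s q.2 * mono x (q.1 + q.2) := by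
    rw [mul_mul_mul_comm, hg, hh, Finset.sum_mul_sum, ← Finset.sum_product']
    simp only [mono_add, mul_mul_mul_comm]
  refine ⟨a₀ + b₀, hx.mem_upperSupp (m := fun q : _ × _ => q.1 + q.2) (i := (a₀, b₀)) hgh
    (Finset.mk_mem_product ha₀ hb₀) (hQ.mul_notMem (hr a₀ ha₀) (hs b₀ hb₀)) ?_, ?_⟩
  · rintro ⟨a, b⟩ hab hne hle
    obtain ⟨ha, hb⟩ := Finset.mem_product.1 hab
    exact hne (Prod.ext_iff.2 (hlead a ha b hb hle))
  · rw [map_add, map_add]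
    exact add_le_add ((hminA a' ha').trans (hw haa)) ((hminB b' hb').trans (hw hbb))

end Weight

/-! ### Convex hulls of upper sets of exponents -/

section Convex

/-- The embedding `toR` of exponent vectors into `ℝ^p` as an additive homomorphism, through which
linear functionals restrict to weights. -/
def toRHom : (Fin p → ℕ) →+ (Fin p → ℝ) := (Nat.castAddMonoidHom ℝ).compLeft (Fin p)

lemma toR_image_add (s t : Set (Fin p → ℕ)) : toR '' (s + t) = toR '' s + toR '' t :=
  image_add toRHom

lemma convexHull_range_natCast : convexHull ℝ (range ((↑) : ℕ → ℝ)) = Ici 0 := by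
  refine (convexHull_min ?_ (convex_Ici 0)).antisymm fun t ht => ?_
  · rintro _ ⟨n, rfl⟩
    exact mem_Ici.2 n.cast_nonneg
  · obtain ⟨n, hn⟩ := exists_nat_ge t
    have hmem (k : ℕ) : (k : ℝ) ∈ convexHull ℝ (range ((↑) : ℕ → ℝ)) :=
      subset_convexHull ℝ _ (mem_range_self k)
    refine (convex_convexHull ℝ _).segment_subset (hmem 0) (hmem n) ?_
    rw [Nat.cast_zero, segment_eq_Icc n.cast_nonneg]
    exact ⟨ht, hn⟩

lemma convexHull_toR_image_univ :
    convexHull ℝ (toR '' (univ : Set (Fin p → ℕ))) = univ.pi fun _ => Ici 0 := by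
  have hpi : toR '' (univ : Set (Fin p → ℕ)) = univ.pi fun _ => range ((↑) : ℕ → ℝ) := by
    rw [image_univ]
    exact range_piMap fun _ => Nat.cast
  rw [hpi, convexHull_pi, convexHull_range_natCast]

lemma isClosed_convexHull_toR_image {U : Set (Fin p → ℕ)} (hU : IsUpperSet U) :
    IsClosed (convexHull ℝ (toR '' U)) := by
  rw [← setOf_minimal_add_univ hU, toR_image_add, convexHull_add, convexHull_toR_image_univ]
  exact (isClosed_set_pi fun _ _ => isClosed_Ici).add_left_of_isCompact
    (((finite_setOf_minimal U).image toR).isCompact_convexHull ℝ)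

lemma nonneg_of_forall_mem_lt {α : Type*} [AddCommMonoid α] [PartialOrder α]
    [CanonicallyOrderedAdd α] {U : Set α} (hU : IsUpperSet U) (hne : U.Nonempty) {w : α →+ ℝ}
    {u : ℝ} (hw : ∀ c ∈ U, u < w c) (d : α) : 0 ≤ w d := by
  obtain ⟨c, hc⟩ := hne
  by_contra! hd
  obtain ⟨n, hn⟩ := Archimedean.arch (w c - u) (neg_pos.2 hd)
  have hlt := hw (c + n • d) (hU le_self_add hc)
  rw [map_add, map_nsmul] at hlt
  rw [smul_neg] at hn
  linarith

lemma exists_monotone_lt_of_notMem_convexHull {U : Set (Fin p → ℕ)} (hU : IsUpperSet U)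
    (hne : U.Nonempty) {y : Fin p → ℕ} (hy : toR y ∉ convexHull ℝ (toR '' U)) :
    ∃ w : (Fin p → ℕ) →+ ℝ, Monotone w ∧ ∀ c ∈ U, w y < w c := by
  obtain ⟨φ, u, hu, hφ⟩ := geometric_hahn_banach_point_closed (convex_convexHull ℝ _)
    (isClosed_convexHull_toR_image hU) hy
  let w : (Fin p → ℕ) →+ ℝ := (φ : (Fin p → ℝ) →+ ℝ).comp toRHom
  have hw : ∀ c ∈ U, u < w c := fun c hc =>
    hφ _ (subset_convexHull ℝ _ (mem_image_of_mem toR hc))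
  refine ⟨w, fun a b hab => ?_, fun c hc => hu.trans (hw c hc)⟩
  obtain ⟨d, rfl⟩ := exists_add_of_le hab
  rw [map_add]
  exact le_add_of_nonneg_right (nonneg_of_forall_mem_lt hU hne hw d)

end Convex

lemma MonomiallyIndependent.toR_add_mem_convexHull {x : Fin p → R} [(span (range x)).IsPrime]
    [IsNoetherianRing (Localization.AtPrime (span (range x)))] (hx : MonomiallyIndependent x)
    {g h : R} {a b : Fin p → ℕ} (ha : a ∈ upperSupp x g) (hb : b ∈ upperSupp x h) :
    toR (a + b) ∈ convexHull ℝ (toR '' upperSupp x (g * h)) := by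
  by_contra hab
  obtain ⟨c, hc, -⟩ :=
    hx.exists_mem_upperSupp_mul_weight_le (w := (0 : _ →+ ℝ)) monotone_const ha hb
  obtain ⟨w, hw, hlt⟩ :=
    exists_monotone_lt_of_notMem_convexHull (isUpperSet_upperSupp x (g * h)) ⟨c, hc⟩ hab
  obtain ⟨d, hd, hle⟩ := hx.exists_mem_upperSupp_mul_weight_le hw ha hb
  exact (hlt d hd).not_ge hle

theorem newtonPolyhedron_mul_general {x : Fin p → R} [(span (range x)).IsPrime]
    [IsNoetherianRing (Localization.AtPrime (span (range x)))] (hx : MonomiallyIndependent x)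
    (g h : R) : ΓE x (g * h) = ΓE x g + ΓE x h := by
  simp only [hx.ΓE_eq_convexHull]
  rw [← convexHull_add, ← toR_image_add]
  refine Subset.antisymm (convexHull_mono (image_mono (hx.upperSupp_mul_subset_add g h)))
    (convexHull_min ?_ (convex_convexHull ℝ _))
  rintro _ ⟨_, ⟨a, ha, b, hb, rfl⟩, rfl⟩
  exact hx.toR_add_mem_convexHull ha hb

/-! ### Generalized regular systems of parameters -/

namespace IsGRSOP

variable {x : Fin p → R}

lemma isPrime_span_image (hx : IsGRSOP x) (S : Set (Fin p)) : (span (x '' S)).IsPrime :=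
  have := (hx.2 S).1
  (Ideal.Quotient.isDomain_iff_prime _).1 this

lemma isPrime_span_range (hx : IsGRSOP x) : (span (range x)).IsPrime :=
  image_univ ▸ hx.isPrime_span_image univ

lemma notMem_span_image (hx : IsGRSOP x) {S : Set (Fin p)} {i : Fin p} (hi : i ∉ S) :
    x i ∉ span (x '' S) := by
  obtain _ | n := p
  · exact i.elim0
  -- In the order which lists `x i` last, regularity of `x i` makes `1` a member of the ideal.
  intro hmem
  set σ := Equiv.swap (Fin.last n) i
  obtain ⟨hproper, hreg⟩ := hx.1 σ
  have hle : span (x '' S) ≤ span ((x ∘ σ) '' {j | j < Fin.last n}) := by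
    refine span_mono ?_
    rintro _ ⟨j, hj, rfl⟩
    refine ⟨σ j, Fin.lt_last_iff_ne_last.2 fun hσ => ?_, by simp [σ]⟩
    rw [Equiv.swap_apply_eq_iff, Equiv.swap_apply_left] at hσ
    exact hi (hσ ▸ hj)
  have hone : (1 : R) ∈ span ((x ∘ σ) '' {j | j < Fin.last n}) :=
    hreg (Fin.last n) 1 (by simpa [σ] using hle hmem)
  exact hproper ((eq_top_iff_one _).2 (span_mono (image_subset_range _ _) hone))

lemma isPermutablyRegular (hx : IsGRSOP x) : IsPermutablyRegular x := fun T _ hi =>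
  (isSMulRegular_quotient_iff_mem_of_smul_mem _ _).2 fun _ hr =>
    ((hx.isPrime_span_image T).mem_or_mem hr).resolve_left (hx.notMem_span_image hi)

end IsGRSOP

/-- `Γ_x(gh) = Γ_x(g) + Γ_x(h)`, Minkowski sum. -/
theorem newtonPolyhedron_mul {R : Type*} [CommRing R] {p : ℕ}
    (x : Fin p → R) (hR : IsRegularDomain R) (hx : IsGRSOP x) (g h : R) :
    ΓE x (g * h) = ΓE x g + ΓE x h := by
  have := hx.isPrime_span_range
  have : IsNoetherianRing (Localization.AtPrime (span (range x))) := (hR.2 _ _).1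
  exact newtonPolyhedron_mul_general hx.isPermutablyRegular.monomiallyIndependent g h

end NND
end
end
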